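/- For every real number t, the function x ↦ x⁵·H(x, t) is integrable on (0, ∞) and ∫₀^∞ x⁵ H(x, t) dx = t⁶/6 + 10π²t⁴/3 + 56π⁴t²/3 + 992π⁶/63. -/

import Mathlib

open Real MeasureTheory

/-- Mirzakhani's kernel H(x, y). -/
noncomputable def H (x y : ℝ) : ℝ :=
  1 / (1 + Real.exp ((x + y) / 2)) + 1 / (1 + Real.exp ((x - y) / 2))

noncomputable def fermi (u : ℝ) : ℝ := 1 / (1 + Real.exp (u / 2))

lemma fermi_continuous : Continuous fermi := by
  unfold fermi
  refine Continuous.div (by fun_prop) (by fun_prop) ?_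
  intro x; positivity

lemma fermi_neg (u : ℝ) : fermi (-u) = 1 - fermi u := by
  unfold fermi
  have h : Real.exp (-u / 2) = (Real.exp (u / 2))⁻¹ := by
    rw [← Real.exp_neg]; congr 1; ring
  have := Real.exp_pos (u / 2)
  rw [h]
  field_simp
  ring

lemma fermi_nonneg (u : ℝ) : 0 ≤ fermi u := by unfold fermi; positivity

lemma fermi_le (u : ℝ) : fermi u ≤ Real.exp (-(1 / 2 * u)) := by
  have h : Real.exp (-(1 / 2 * u)) = 1 / Real.exp (u / 2) := by
    rw [one_div (Real.exp (u / 2)), ← Real.exp_neg]; congr 1; ring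
  rw [h]
  unfold fermi
  gcongr
  linarith

lemma intpow (k : ℕ) (r : ℝ) (hr : 0 < r) :
    IntegrableOn (fun u : ℝ => u ^ k * Real.exp (-(r * u))) (Set.Ioi 0) := by
  have h := integrableOn_rpow_mul_exp_neg_mul_rpow (p := 1) (s := (k : ℝ)) (b := r)
    (by have : (0 : ℝ) ≤ k := Nat.cast_nonneg k
        linarith) one_pos hr
  refine h.congr_fun (fun x _ => ?_) measurableSet_Ioi
  simp

lemma intval (k : ℕ) (r : ℝ) (hr : 0 < r) :
    ∫ u in Set.Ioi (0 : ℝ), u ^ k * Real.exp (-(r * u)) = (1 / r) ^ (k + 1) * k.factorial := by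
  have h := Real.integral_rpow_mul_exp_neg_mul_Ioi (a := (k : ℝ) + 1) (r := r)
    (by positivity) hr
  rw [Real.Gamma_nat_eq_factorial] at h
  have e : (1 / r) ^ ((k : ℝ) + 1) = (1 / r) ^ (k + 1) := by
    rw [← Real.rpow_natCast]; push_cast; rfl
  rw [e] at h
  rw [← h]
  refine setIntegral_congr_fun measurableSet_Ioi (fun x _ => ?_)
  simp

lemma int_fermi (k : ℕ) : IntegrableOn (fun u : ℝ => u ^ k * fermi u) (Set.Ioi 0) := by
  refine Integrable.mono' (intpow k (1 / 2) (by norm_num)) ?_ ?_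
  · exact ((continuous_pow k).mul fermi_continuous).aestronglyMeasurable
  · refine (ae_restrict_iff' measurableSet_Ioi).2 (Filter.Eventually.of_forall fun x hx => ?_)
    have hx' : (0 : ℝ) < x := hx
    rw [Real.norm_of_nonneg (mul_nonneg (by positivity) (fermi_nonneg x))]
    exact mul_le_mul_of_nonneg_left (fermi_le x) (by positivity)

lemma fermi_hasSum (u : ℝ) (hu : 0 < u) :
    HasSum (fun n : ℕ => (-1 : ℝ) ^ n * Real.exp (-((n + 1) / 2 * u))) (fermi u) := by
  have hlt : Real.exp (-(u / 2)) < 1 := by rw [Real.exp_lt_one_iff]; linarith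
  have h := (hasSum_geometric_of_abs_lt_one (r := -Real.exp (-(u / 2)))
    (by rw [abs_neg, abs_of_pos (Real.exp_pos _)]; exact hlt)).mul_left (Real.exp (-(u / 2)))
  convert! h using 1
  · ext n
    rw [neg_pow (Real.exp (-(u / 2))), ← Real.exp_nat_mul, mul_left_comm, ← Real.exp_add]
    congr 2; ring
  · unfold fermi
    rw [Real.exp_neg, sub_neg_eq_add]
    have := Real.exp_pos (u / 2)
    field_simp
    rw [add_comm]

lemma alt_sum (k : ℕ) (hk : k ≠ 0) (Z : ℝ) (hZ : HasSum (fun n : ℕ => 1 / (n : ℝ) ^ k) Z) :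
    HasSum (fun n : ℕ => (-1 : ℝ) ^ n * (1 / ((n : ℝ) + 1) ^ k)) ((1 - 2 / 2 ^ k) * Z) := by
  have hev : HasSum (fun n : ℕ => 1 / ((2 * n : ℕ) : ℝ) ^ k) (1 / 2 ^ k * Z) := by
    have e : (fun n : ℕ => 1 / ((2 * n : ℕ) : ℝ) ^ k)
        = fun n : ℕ => 1 / 2 ^ k * (1 / (n : ℝ) ^ k) := by
      ext n
      rw [Nat.cast_mul, Nat.cast_ofNat, mul_pow, one_div_mul_one_div]
    rw [e]
    exact hZ.mul_left (1 / 2 ^ k)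
  have hinj : Function.Injective (fun n : ℕ => 2 * n + 1) := by
    intro a b h
    simp only at h
    omega
  have hodd0 : Summable (fun n : ℕ => 1 / ((2 * n + 1 : ℕ) : ℝ) ^ k) :=
    hZ.summable.comp_injective (i := fun n : ℕ => 2 * n + 1) hinj
  have hO := hodd0.hasSum
  generalize (∑' n : ℕ, 1 / ((2 * n + 1 : ℕ) : ℝ) ^ k) = O at hO
  have hOv : 1 / 2 ^ k * Z + O = Z := 
    (HasSum.even_add_odd (f := fun n : ℕ => 1 / (n : ℝ) ^ k) hev hO).unique hZ
  have hev' : HasSum (fun n : ℕ => 1 / ((2 * n + 2 : ℕ) : ℝ) ^ k) (1 / 2 ^ k * Z) := by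
    have h := (hasSum_nat_add_iff' (f := fun n : ℕ => 1 / ((2 * n : ℕ) : ℝ) ^ k) 1).2 hev
    rw [Finset.sum_range_one, mul_zero, Nat.cast_zero, zero_pow hk, div_zero, sub_zero] at h
    exact h
  have e1 : (fun n : ℕ => (-1 : ℝ) ^ (2 * n) * (1 / (((2 * n : ℕ) : ℝ) + 1) ^ k))
      = fun n : ℕ => 1 / ((2 * n + 1 : ℕ) : ℝ) ^ k := by
    ext n
    rw [pow_mul, neg_one_sq, one_pow, one_mul, Nat.cast_succ]
  have e2 : (fun n : ℕ => (-1 : ℝ) ^ (2 * n + 1) * (1 / (((2 * n + 1 : ℕ) : ℝ) + 1) ^ k))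
      = fun n : ℕ => -(1 / ((2 * n + 2 : ℕ) : ℝ) ^ k) := by
    ext n
    rw [pow_succ, pow_mul, neg_one_sq, one_pow, one_mul, neg_one_mul, ← Nat.cast_succ]
  have hE := hev'.neg
  rw [← e1] at hO
  rw [← e2] at hE
  have hall := HasSum.even_add_odd
    (f := fun n : ℕ => (-1 : ℝ) ^ n * (1 / ((n : ℝ) + 1) ^ k)) hO hE
  have e3 : (1 - 2 / 2 ^ k) * Z = O + -(1 / 2 ^ k * Z) := by
    linear_combination -hOv
  rw [e3]
  exact hall

lemma moment (k : ℕ) (hk : k ≠ 0) (Z : ℝ)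
    (hZ : HasSum (fun n : ℕ => 1 / (n : ℝ) ^ (k + 1)) Z) :
    ∫ u in Set.Ioi (0 : ℝ), u ^ k * fermi u
      = 2 ^ (k + 1) * k.factorial * ((1 - 2 / 2 ^ (k + 1)) * Z) := by
  have hr (n : ℕ) : (0 : ℝ) < ((n : ℝ) + 1) / 2 := by positivity
  have hval (n : ℕ) : (1 / (((n : ℝ) + 1) / 2)) ^ (k + 1) * (k.factorial : ℝ)
      = 2 ^ (k + 1) * k.factorial * (1 / ((n : ℝ) + 1) ^ (k + 1)) := by
    rw [one_div_div, div_pow]; ring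
  have h := hasSum_integral_of_summable_integral_norm (μ := volume.restrict (Set.Ioi (0 : ℝ)))
    (F := fun (n : ℕ) (u : ℝ) => (-1 : ℝ) ^ n * (u ^ k * Real.exp (-(((n : ℝ) + 1) / 2 * u))))
    (fun n => (intpow k _ (hr n)).const_mul _) (by
      have e (n : ℕ) : ∫ u in Set.Ioi (0 : ℝ),
          ‖(-1 : ℝ) ^ n * (u ^ k * Real.exp (-(((n : ℝ) + 1) / 2 * u)))‖
          = 2 ^ (k + 1) * k.factorial * (1 / ((n : ℝ) + 1) ^ (k + 1)) := by
        rw [← hval, ← intval k _ (hr n)]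
        refine setIntegral_congr_fun measurableSet_Ioi (fun x hx => ?_)
        have hx' : (0 : ℝ) < x := hx
        simp [abs_of_pos hx']
      simp_rw [e]
      refine Summable.mul_left _ ?_
      have := (summable_nat_add_iff 1).2 hZ.summable
      simpa using this)
  have h2 := (alt_sum (k + 1) (by omega) Z hZ).mul_left ((2 : ℝ) ^ (k + 1) * k.factorial)
  have h3 : (fun n : ℕ => ∫ u in Set.Ioi (0 : ℝ),
      (-1 : ℝ) ^ n * (u ^ k * Real.exp (-(((n : ℝ) + 1) / 2 * u))))
      = fun n : ℕ => (2 : ℝ) ^ (k + 1) * k.factorial *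
        ((-1 : ℝ) ^ n * (1 / ((n : ℝ) + 1) ^ (k + 1))) := by
    ext n
    rw [integral_const_mul, intval k _ (hr n), hval]; ring
  rw [h3] at h
  rw [← h.unique h2]
  refine setIntegral_congr_fun measurableSet_Ioi (fun x hx => ?_)
  have := (fermi_hasSum x hx).mul_left (x ^ k)
  rw [← this.tsum_eq]
  congr 1
  ext n
  ring

lemma bern6 : bernoulli 6 = 1 / 42 := by
  rw [bernoulli_eq_bernoulli'_of_ne_one (by decide)]
  have h5 : bernoulli' 5 = 0 := bernoulli'_eq_zero_of_odd (by decide) (by norm_num)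
  have c1 : Nat.choose 6 2 = 15 := by decide
  have c2 : Nat.choose 6 4 = 15 := by decide
  rw [bernoulli'_def]
  norm_num [Finset.sum_range_succ, h5, c1, c2]

lemma zeta6 : HasSum (fun n : ℕ => (1 : ℝ) / (n : ℝ) ^ 6) (π ^ 6 / 945) := by
  convert! hasSum_zeta_nat three_ne_zero using 1
  simp only [Nat.reduceAdd, Nat.reduceMul, Nat.reduceSub]
  rw [bern6]
  norm_num [Nat.factorial]
  ring

lemma M1 : ∫ u in Set.Ioi (0 : ℝ), u ^ 1 * fermi u = π ^ 2 / 3 := by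
  rw [moment 1 (by norm_num) _ hasSum_zeta_two]
  norm_num [Nat.factorial]; ring

lemma M3 : ∫ u in Set.Ioi (0 : ℝ), u ^ 3 * fermi u = 14 * π ^ 4 / 15 := by
  rw [moment 3 (by norm_num) _ hasSum_zeta_four]
  norm_num [Nat.factorial]; ring

lemma M5 : ∫ u in Set.Ioi (0 : ℝ), u ^ 5 * fermi u = 64 * 31 * π ^ 6 / 252 := by
  rw [moment 5 (by norm_num) _ zeta6]
  norm_num [Nat.factorial]; ring

lemma int_poly0 (t : ℝ) :
    IntegrableOn (fun u : ℝ => (u - t) ^ 5 * fermi u) (Set.Ioi 0) := by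
  have h := (((((int_fermi 5).add ((int_fermi 4).const_mul (-5 * t))).add
    ((int_fermi 3).const_mul (10 * t ^ 2))).add ((int_fermi 2).const_mul (-10 * t ^ 3))).add
    ((int_fermi 1).const_mul (5 * t ^ 4))).add ((int_fermi 0).const_mul (-t ^ 5))
  refine h.congr_fun (fun x _ => ?_) measurableSet_Ioi
  simp only [Pi.add_apply]
  ring

lemma poly_cont (t : ℝ) : Continuous (fun u : ℝ => (u - t) ^ 5 * fermi u) :=
  (by fun_prop : Continuous fun u : ℝ => (u - t) ^ 5).mul fermi_continuous

lemma int_poly (t : ℝ) :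
    IntegrableOn (fun u : ℝ => (u - t) ^ 5 * fermi u) (Set.Ioi t) := by
  have h1 : IntegrableOn (fun u : ℝ => (u - t) ^ 5 * fermi u) (Set.Icc t 0) :=
    (poly_cont t).continuousOn.integrableOn_compact isCompact_Icc
  refine (h1.union (int_poly0 t)).mono_set ?_
  intro x hx
  rcases le_or_gt x 0 with h | h
  · exact Or.inl ⟨le_of_lt hx, h⟩
  · exact Or.inr h

lemma preim (t : ℝ) : (fun x : ℝ => x + t) ⁻¹' Set.Ioi t = Set.Ioi 0 := by
  ext x; simp

lemma int_shift (t : ℝ) :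
    IntegrableOn (fun x : ℝ => x ^ 5 * fermi (x + t)) (Set.Ioi 0) := by
  have := ((measurePreserving_add_right volume t).integrableOn_comp_preimage
    (measurableEmbedding_addRight t)).2 (int_poly t)
  rw [preim] at this
  refine this.congr_fun (fun x _ => ?_) measurableSet_Ioi
  simp

lemma val_shift (t : ℝ) :
    ∫ x in Set.Ioi (0 : ℝ), x ^ 5 * fermi (x + t)
      = (∫ u in Set.Ioi (0 : ℝ), (u - t) ^ 5 * fermi u)
        - ∫ u in (0 : ℝ)..t, (u - t) ^ 5 * fermi u := by
  have := (measurePreserving_add_right volume t).setIntegral_preimage_emb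
    (measurableEmbedding_addRight t) (fun u : ℝ => (u - t) ^ 5 * fermi u) (Set.Ioi t)
  rw [preim] at this
  simp only [add_sub_cancel_right] at this
  rw [this, ← intervalIntegral.integral_interval_add_Ioi (int_poly0 t) (int_poly t)]
  ring

lemma finite_part (t : ℝ) :
    (∫ u in (0 : ℝ)..t, (u - t) ^ 5 * fermi u)
      + (∫ u in (0 : ℝ)..(-t), (u - -t) ^ 5 * fermi u) = - (t ^ 6 / 6) := by
  have h1 : (∫ u in (0 : ℝ)..(-t), (u - -t) ^ 5 * fermi u)
      = ∫ u in (0 : ℝ)..t, (u - t) ^ 5 * (1 - fermi u) := by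
    have := intervalIntegral.integral_comp_neg (a := 0) (b := t)
      (fun u : ℝ => (u - -t) ^ 5 * fermi u)
    rw [neg_zero] at this
    rw [intervalIntegral.integral_symm, ← this, ← intervalIntegral.integral_neg]
    congr 1
    ext u
    rw [fermi_neg]; ring
  rw [h1, ← intervalIntegral.integral_add ((poly_cont t).intervalIntegrable _ _)]
  · have : ∀ u : ℝ, (u - t) ^ 5 * fermi u + (u - t) ^ 5 * (1 - fermi u) = (u - t) ^ 5 := by
      intro u; ring
    simp_rw [this]
    rw [intervalIntegral.integral_comp_sub_right (fun u : ℝ => u ^ 5) t, integral_pow]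
    norm_num
    ring
  · exact ((by fun_prop : Continuous fun u : ℝ => (u - t) ^ 5).mul
      (continuous_const.sub fermi_continuous)).intervalIntegrable _ _

lemma main_part (t : ℝ) :
    (∫ u in Set.Ioi (0 : ℝ), (u - t) ^ 5 * fermi u)
      + (∫ u in Set.Ioi (0 : ℝ), (u - -t) ^ 5 * fermi u)
      = 2 * (64 * 31 * π ^ 6 / 252) + 20 * t ^ 2 * (14 * π ^ 4 / 15) + 10 * t ^ 4 * (π ^ 2 / 3) := by
  have i5 := (int_fermi 5).const_mul 2
  have i3 := (int_fermi 3).const_mul (20 * t ^ 2)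
  have i1 := (int_fermi 1).const_mul (10 * t ^ 4)
  have i53 : IntegrableOn (fun u : ℝ => 2 * (u ^ 5 * fermi u) + 20 * t ^ 2 * (u ^ 3 * fermi u))
    (Set.Ioi 0) := i5.add i3
  rw [← integral_add (int_poly0 t) (int_poly0 (-t)), ← M5, ← M3, ← M1,
    ← integral_const_mul, ← integral_const_mul, ← integral_const_mul,
    ← integral_add i5 i3, ← integral_add i53 i1]
  congr 1
  ext u
  ring

theorem integral_x5_H (t : ℝ) :
    IntegrableOn (fun x : ℝ => x ^ 5 * H x t) (Set.Ioi 0) ∧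
    ∫ x in Set.Ioi (0 : ℝ), x ^ 5 * H x t =
      t ^ 6 / 6 + 10 * π ^ 2 * t ^ 4 / 3 + 56 * π ^ 4 * t ^ 2 / 3 +
        992 * π ^ 6 / 63 := by
  have e : (fun x : ℝ => x ^ 5 * H x t)
      = fun x : ℝ => x ^ 5 * fermi (x + t) + x ^ 5 * fermi (x + -t) := by
    ext x
    simp only [H, fermi, ← sub_eq_add_neg]
    ring
  rw [e]
  refine ⟨(int_shift t).add (int_shift (-t)), ?_⟩
  rw [integral_add (int_shift t) (int_shift (-t)), val_shift, val_shift]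
  linear_combination main_part t - finite_part t
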